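/- Let s > 1/2. There exists a constant C = C(s) such that for every Schwartz function a on ℝ³: ‖a‖_{L⁴_h(L^∞_v)} ≤ C ‖a‖_{L²_h(H^s)_v}^{1/2} ‖∇_h a‖_{L²_h(H^s)_v}^{1/2}, where ‖a‖_{L⁴_h(L^∞_v)} = ( ∫_{ℝ²} ‖a(x_h,·)‖⁴_{L^∞(ℝ)} dx_h )^{1/4} and ‖a‖_{L²_h(H^s)_v}² = ∫_{ℝ²} ‖a(x_h,·)‖²_{H^s(ℝ)} dx_h. Consequently, by Minkowski's inequality, the same bound holds for ‖a‖_{L^∞_v(L⁴_h)} = sup over x₃ of the L⁴(ℝ²_h)-norm. -/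

import Mathlib

/-!
Write `b̂(x, y, ξ)` for the Fourier transform of a Schwartz function `b` in the vertical variable
only, and `N(x, y)² = ∫ (1 + ξ²)^s |b̂(x, y, ξ)|² dξ` for the squared `H^s` norm of a vertical slice.
The inequality combines two facts.

* Vertically, Fourier inversion and Cauchy–Schwarz give `sup_z |b(x, y, z)|² ≤ K N(x, y)²` with
  `K = ∫ (1 + ξ²)^(-s) dξ`, finite since `s > 1/2` (`sobolev_slice`, `kS_lt_top`).
* Horizontally, `N` obeys Ladyzhenskaya's inequality in the plane (`ladyzhenskaya`). At each
  frequency, `|b̂|² ≤ 2 ∫ |b̂| |∂b̂|` along any horizontal line (`enorm_sq_le_lintegral`). Integrating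
  this against the weight gives a bound for `N(x, y)²` by a function of `y` alone (`nSq_le_x`) and
  one by a function of `x` alone (`nSq_le_y`). The integral of the product of the two bounds
  factorises, and Cauchy–Schwarz (`pairE_total_sq_le`) bounds each factor by the norms of `b` and of
  a horizontal derivative.

Consequently `L4_bound` holds for every function on the plane dominated by `K^{1/2} N`. Both
`x_h ↦ sup_z |b(x_h, z)|` and, for each fixed `z`, `x_h ↦ |b(x_h, z)|` are of this kind, so the
`L^∞_v(L⁴_h)` bound follows in the same way as the `L⁴_h(L^∞_v)` one, with the same constant.

The estimates are carried out with `ℝ≥0∞`-valued integrals, where Tonelli's theorem needs no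
integrability. The decay of `b̂` (`vFT_decay`, `nSq_bound`) is used to differentiate and invert, and
to know that the norms on the right are finite, so that the real-valued integrals defining them
have their intended values.
-/

/-!
STATEMENT 18: the anisotropic Gagliardo–Nirenberg type inequality
`‖a‖_{L⁴_h(L^∞_v)} ≤ C ‖a‖_{L²_h(H^s)_v}^{1/2} ‖∇_h a‖_{L²_h(H^s)_v}^{1/2}` for `s > 1/2`,
and the same bound for `‖a‖_{L^∞_v(L⁴_h)}`.
-/

noncomputable section
open MeasureTheory Real Complex
open scoped RealInnerProductSpace

abbrev R3 := EuclideanSpace ℝ (Fin 3)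

/-- Construct a point of `ℝ³`. -/
def v3 (a b c : ℝ) : R3 := (WithLp.equiv 2 (Fin 3 → ℝ)).symm ![a, b, c]

/-- The partial derivative `∂ᵢ f` of a scalar function on `ℝ³`. -/
def pd (i : Fin 3) (f : R3 → ℝ) (x : R3) : ℝ := fderiv ℝ f x (EuclideanSpace.single i 1)

/-- The Fourier transform on `ℝ³`. -/
def FT3 (f : R3 → ℂ) (ξ : R3) : ℂ :=
  ∫ x : R3, Complex.exp ((-(2 * π * ⟪x, ξ⟫) : ℝ) * Complex.I) * f x

/-- The inverse Fourier transform on `ℝ³`. -/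
def IFT3 (f : R3 → ℂ) (x : R3) : ℂ :=
  ∫ ξ : R3, Complex.exp (((2 * π * ⟪x, ξ⟫) : ℝ) * Complex.I) * f ξ

/-- The anisotropic weight `(1+|ξ_h|²)^t (1+|ξ₃|²)^s`. -/
def wgt (t s : ℝ) (ξ : R3) : ℝ := (1 + ξ 0 ^ 2 + ξ 1 ^ 2) ^ t * (1 + ξ 2 ^ 2) ^ s

/-- The squared anisotropic Sobolev norm `‖f‖²_{H^{t,s}(ℝ³)}`. -/
def hnormSq (t s : ℝ) (f : R3 → ℝ) : ℝ :=
  ∫ ξ : R3, wgt t s ξ * ‖FT3 (fun x => (f x : ℂ)) ξ‖ ^ 2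

/-- The anisotropic Sobolev norm `‖f‖_{H^{t,s}(ℝ³)}`. -/
def hnorm (t s : ℝ) (f : R3 → ℝ) : ℝ := Real.sqrt (hnormSq t s f)

/-- Membership in the anisotropic Sobolev space `H^{t,s}(ℝ³)`. -/
def memH (t s : ℝ) (f : R3 → ℝ) : Prop :=
  Integrable (fun ξ : R3 => wgt t s ξ * ‖FT3 (fun x => (f x : ℂ)) ξ‖ ^ 2)

/-- Squared `H^{t,s}` norm of a vector field (sum over components). -/
def hnormVecSq (t s : ℝ) (u : R3 → R3) : ℝ := ∑ i : Fin 3, hnormSq t s fun x => u x i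

/-- `H^{t,s}` norm of a vector field. -/
def hnormVec (t s : ℝ) (u : R3 → R3) : ℝ := Real.sqrt (hnormVecSq t s u)

/-- Componentwise membership of a vector field in `H^{t,s}(ℝ³)`. -/
def memHVec (t s : ℝ) (u : R3 → R3) : Prop := ∀ i : Fin 3, memH t s fun x => u x i

/-- Squared `H^{t,s}` norm of the horizontal gradient of a scalar function. -/
def gradhNormSq (t s : ℝ) (f : R3 → ℝ) : ℝ :=
  hnormSq t s (pd 0 f) + hnormSq t s (pd 1 f)

/-- `H^{t,s}` norm of the horizontal gradient of a scalar function. -/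
def gradhNorm (t s : ℝ) (f : R3 → ℝ) : ℝ := Real.sqrt (gradhNormSq t s f)

/-- Membership of the horizontal gradient in `H^{t,s}`. -/
def memHGradh (t s : ℝ) (f : R3 → ℝ) : Prop := memH t s (pd 0 f) ∧ memH t s (pd 1 f)

/-- Squared `H^{t,s}` norm of the horizontal gradient of a vector field. -/
def gradhVecNormSq (t s : ℝ) (u : R3 → R3) : ℝ :=
  ∑ i : Fin 3, gradhNormSq t s fun x => u x i

/-- `H^{t,s}` norm of the horizontal gradient of a vector field. -/
def gradhVecNorm (t s : ℝ) (u : R3 → R3) : ℝ := Real.sqrt (gradhVecNormSq t s u)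

/-- Membership of the horizontal gradient of a vector field in `H^{t,s}`. -/
def memHGradhVec (t s : ℝ) (u : R3 → R3) : Prop := ∀ i : Fin 3, memHGradh t s fun x => u x i

/-- A vector field on `ℝ³` is (pointwise) divergence free. -/
def DivFree (u : R3 → R3) : Prop :=
  ∀ x : R3, pd 0 (fun y => u y 0) x + pd 1 (fun y => u y 1) x + pd 2 (fun y => u y 2) x = 0

/-- A Littlewood–Paley pair: smooth `ψ, φ : ℝ → [0,1]`, `supp ψ ⊆ {|r| ≤ 4/3}`,
`supp φ ⊆ {3/4 ≤ |r| ≤ 8/3}`, with `ψ(r) + Σ_{q ≥ 0} φ(2^{-q} r) = 1`. -/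
structure DyadicPair (ψ φ : ℝ → ℝ) : Prop where
  smooth_ψ : ContDiff ℝ (⊤ : ℕ∞) ψ
  smooth_φ : ContDiff ℝ (⊤ : ℕ∞) φ
  range_ψ : ∀ r, ψ r ∈ Set.Icc (0 : ℝ) 1
  range_φ : ∀ r, φ r ∈ Set.Icc (0 : ℝ) 1
  supp_ψ : ∀ r, ψ r ≠ 0 → |r| ≤ 4 / 3
  supp_φ : ∀ r, φ r ≠ 0 → 3 / 4 ≤ |r| ∧ |r| ≤ 8 / 3
  partition : ∀ r : ℝ, ψ r + ∑' q : ℕ, φ ((2 : ℝ) ^ (-(q : ℤ)) * r) = 1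

/-- The nonhomogeneous dyadic multiplier: `φ(2^{-q}|r|)` for `q ≥ 0`, `ψ(|r|)` for
`q = -1`, and `0` for `q ≤ -2`. -/
def dmul (ψ φ : ℝ → ℝ) (q : ℤ) (r : ℝ) : ℝ :=
  if 0 ≤ q then φ ((2 : ℝ) ^ (-q) * |r|) else if q = -1 then ψ |r| else 0

/-- The vertical dyadic block `Δ_q^v f = 𝓕⁻¹(φ(2^{-q}|ξ₃|) f̂)` of a scalar function on `ℝ³`. -/
def Dv (ψ φ : ℝ → ℝ) (q : ℤ) (f : R3 → ℝ) (x : R3) : ℝ :=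
  (IFT3 (fun ξ => (dmul ψ φ q (ξ 2) : ℂ) * FT3 (fun y => (f y : ℂ)) ξ) x).re

/-- The vertical low-frequency cut-off `S_q^v f = Σ_{q' ≤ q-1} Δ_{q'}^v f`. -/
def Sv (ψ φ : ℝ → ℝ) (q : ℤ) (f : R3 → ℝ) (x : R3) : ℝ :=
  ∑ j ∈ Finset.Icc (-1 : ℤ) (q - 1), Dv ψ φ j f x

/-- The `L²(ℝ³)` inner product of two real functions. -/
def l2ip (f g : R3 → ℝ) : ℝ := ∫ x : R3, f x * g x

/-- Sum over dyadic indices `q ≥ -1`. -/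
def sumQ (g : ℤ → ℝ) : ℝ := ∑' n : ℕ, g ((n : ℤ) - 1)

abbrev R2 := EuclideanSpace ℝ (Fin 2)

/-- The Fourier transform on `ℝ`. -/
def FT1 (f : ℝ → ℂ) (ξ : ℝ) : ℂ :=
  ∫ x : ℝ, Complex.exp ((-(2 * π * x * ξ) : ℝ) * Complex.I) * f x

/-- The squared `H^s(ℝ)` norm of the vertical slice `x₃ ↦ a (x_h, x₃)`. -/
def vSliceNormSq (s : ℝ) (a : R3 → ℝ) (xh : R2) : ℝ :=
  ∫ ξ : ℝ, (1 + ξ ^ 2) ^ s * ‖FT1 (fun x3 => (a (v3 (xh 0) (xh 1) x3) : ℂ)) ξ‖ ^ 2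

/-- The `L²_h(H^s)_v` norm: `‖a‖² = ∫_{ℝ²} ‖a(x_h,·)‖²_{H^s(ℝ)} dx_h`. -/
def L2hHsv (s : ℝ) (a : R3 → ℝ) : ℝ := Real.sqrt (∫ xh : R2, vSliceNormSq s a xh)

/-- The `L²_h(H^s)_v` norm of the horizontal gradient `∇_h a = (∂₁ a, ∂₂ a)`. -/
def gradhL2hHsv (s : ℝ) (a : R3 → ℝ) : ℝ :=
  Real.sqrt (∫ xh : R2, (vSliceNormSq s (pd 0 a) xh + vSliceNormSq s (pd 1 a) xh))

/-- The `L⁴_h(L^∞_v)` norm `(∫_{ℝ²} ‖a(x_h,·)‖⁴_{L^∞(ℝ)} dx_h)^{1/4}`. -/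
def L4hLinfv (a : R3 → ℝ) : ℝ :=
  (∫ xh : R2, (⨆ x3 : ℝ, |a (v3 (xh 0) (xh 1) x3)|) ^ 4) ^ ((1 : ℝ) / 4)

/-- The `L^∞_v(L⁴_h)` norm `sup_{x₃} ‖a(·,x₃)‖_{L⁴(ℝ²_h)}`. -/
def LinfvL4h (a : R3 → ℝ) : ℝ :=
  ⨆ x3 : ℝ, (∫ xh : R2, |a (v3 (xh 0) (xh 1) x3)| ^ 4) ^ ((1 : ℝ) / 4)

/-! ### The Fourier transform in the vertical variable -/

open scoped LineDeriv ENNReal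
open Filter Topology

/-- The partial Fourier transform `(x, y, ξ) ↦ 𝓕(b(x, y, ·))(ξ)` in the vertical variable. -/
def vFT (b : R3 → ℝ) (x y ξ : ℝ) : ℂ := FT1 (fun z => (b (v3 x y z) : ℂ)) ξ

/-- The partial derivative `∂ᵢ` as an operation on Schwartz functions. -/
def dS (i : Fin 3) (b : SchwartzMap R3 ℝ) : SchwartzMap R3 ℝ :=
  ∂_{(EuclideanSpace.single i (1 : ℝ) : R3)} b

lemma dS_apply (i : Fin 3) (b : SchwartzMap R3 ℝ) : ⇑(dS i b) = pd i b := by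
  ext x
  simp [dS, pd, SchwartzMap.lineDerivOp_apply_eq_fderiv]

lemma v3_eq (x y z : ℝ) : v3 x y z = x • (EuclideanSpace.single 0 (1 : ℝ) : R3)
    + y • (EuclideanSpace.single 1 (1 : ℝ) : R3) + z • (EuclideanSpace.single 2 (1 : ℝ) : R3) := by
  ext i
  fin_cases i <;> simp [v3]

lemma norm_v3_sq (x y z : ℝ) : ‖v3 x y z‖ ^ 2 = x ^ 2 + y ^ 2 + z ^ 2 := by
  simp [v3, EuclideanSpace.norm_sq_eq, Fin.sum_univ_three]

lemma continuous_v3 : Continuous fun p : ℝ × ℝ × ℝ => v3 p.1 p.2.1 p.2.2 := by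
  simp only [v3_eq]
  fun_prop

lemma continuous_v3_z (x y : ℝ) : Continuous fun z => v3 x y z := by
  simp only [v3_eq]
  fun_prop

lemma hasDerivAt_x (b : SchwartzMap R3 ℝ) (x y z : ℝ) :
    HasDerivAt (fun x => b (v3 x y z)) (dS 0 b (v3 x y z)) x := by
  rw [dS_apply]
  have h : HasDerivAt (fun x => v3 x y z) (EuclideanSpace.single 0 (1 : ℝ) : R3) x := by
    simp only [v3_eq]
    simpa using ((((hasDerivAt_id x).smul_const (EuclideanSpace.single 0 (1 : ℝ) : R3)).add_const
      (y • (EuclideanSpace.single 1 (1 : ℝ) : R3))).add_const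
      (z • (EuclideanSpace.single 2 (1 : ℝ) : R3)))
  exact (b.differentiableAt.hasFDerivAt (x := v3 x y z)).comp_hasDerivAt x h

lemma hasDerivAt_y (b : SchwartzMap R3 ℝ) (x y z : ℝ) :
    HasDerivAt (fun y => b (v3 x y z)) (dS 1 b (v3 x y z)) y := by
  rw [dS_apply]
  have h : HasDerivAt (fun y => v3 x y z) (EuclideanSpace.single 1 (1 : ℝ) : R3) y := by
    simp only [v3_eq]
    simpa using ((((hasDerivAt_id y).smul_const (EuclideanSpace.single 1 (1 : ℝ) : R3)).const_add
      (x • (EuclideanSpace.single 0 (1 : ℝ) : R3))).add_const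
      (z • (EuclideanSpace.single 2 (1 : ℝ) : R3)))
  exact (b.differentiableAt.hasFDerivAt (x := v3 x y z)).comp_hasDerivAt y h

lemma hasDerivAt_z (b : SchwartzMap R3 ℝ) (x y z : ℝ) :
    HasDerivAt (fun z => b (v3 x y z)) (dS 2 b (v3 x y z)) z := by
  rw [dS_apply]
  have h : HasDerivAt (fun z => v3 x y z) (EuclideanSpace.single 2 (1 : ℝ) : R3) z := by
    simp only [v3_eq]
    simpa using (((hasDerivAt_id z).smul_const (EuclideanSpace.single 2 (1 : ℝ) : R3)).const_add
      (x • (EuclideanSpace.single 0 (1 : ℝ) : R3) + y • (EuclideanSpace.single 1 (1 : ℝ) : R3)))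
  exact (b.differentiableAt.hasFDerivAt (x := v3 x y z)).comp_hasDerivAt z h

/-- Three powers of `(1 + |v|)²` bound the product of the weights `1 + x²`, `1 + y²`, `1 + z²`. -/
lemma schwartz_decay (b : SchwartzMap R3 ℝ) : ∃ C : ℝ, 0 ≤ C ∧ ∀ x y z : ℝ,
    (1 + x ^ 2) * (1 + y ^ 2) * |b (v3 x y z)| ≤ C * (1 + z ^ 2)⁻¹ := by
  refine ⟨2 ^ 6 * ((Finset.Iic (6, 0)).sup fun m => SchwartzMap.seminorm ℝ m.1 m.2) b,
    by positivity, fun x y z => ?_⟩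
  have h := SchwartzMap.one_add_le_sup_seminorm_apply (𝕜 := ℝ) (m := (6, 0)) le_rfl le_rfl b
    (v3 x y z)
  simp only [norm_iteratedFDeriv_zero, Real.norm_eq_abs] at h
  rw [← div_eq_mul_inv, le_div_iff₀ (by positivity)]
  refine le_trans ?_ h
  have h2 := norm_v3_sq x y z
  have hN : 0 ≤ ‖v3 x y z‖ := norm_nonneg _
  have e : ∀ t : ℝ, t ^ 2 ≤ ‖v3 x y z‖ ^ 2 → 1 + t ^ 2 ≤ (1 + ‖v3 x y z‖) ^ 2 := by
    intro t ht
    nlinarith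
  have ex := e x (by nlinarith [sq_nonneg y, sq_nonneg z])
  have ey := e y (by nlinarith [sq_nonneg x, sq_nonneg z])
  have ez := e z (by nlinarith [sq_nonneg y, sq_nonneg x])
  calc (1 + x ^ 2) * (1 + y ^ 2) * |b (v3 x y z)| * (1 + z ^ 2)
      = ((1 + x ^ 2) * (1 + y ^ 2) * (1 + z ^ 2)) * |b (v3 x y z)| := by ring
    _ ≤ ((1 + ‖v3 x y z‖) ^ 2 * (1 + ‖v3 x y z‖) ^ 2 * (1 + ‖v3 x y z‖) ^ 2)
        * |b (v3 x y z)| := by gcongr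
    _ = _ := by ring

lemma schwartz_decay' (b : SchwartzMap R3 ℝ) : ∃ C : ℝ, 0 ≤ C ∧ ∀ x y z : ℝ,
    |b (v3 x y z)| ≤ C * (1 + z ^ 2)⁻¹ := by
  obtain ⟨C, hC, h⟩ := schwartz_decay b
  refine ⟨C, hC, fun x y z => le_trans ?_ (h x y z)⟩
  refine le_mul_of_one_le_left (abs_nonneg _) ?_
  nlinarith [sq_nonneg x, sq_nonneg y, mul_nonneg (sq_nonneg x) (sq_nonneg y)]

lemma slice_cont (b : SchwartzMap R3 ℝ) (x y : ℝ) :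
    Continuous fun z => ((b (v3 x y z) : ℝ) : ℂ) :=
  continuous_ofReal.comp (b.continuous.comp (continuous_v3_z x y))

lemma slice_integrable (b : SchwartzMap R3 ℝ) (x y : ℝ) :
    Integrable fun z => ((b (v3 x y z) : ℝ) : ℂ) := by
  obtain ⟨C, hC, h⟩ := schwartz_decay' b
  refine (integrable_inv_one_add_sq.const_mul C).mono' (slice_cont b x y).aestronglyMeasurable
    (Eventually.of_forall fun z => ?_)
  simpa using h x y z

lemma norm_phase_mul (t : ℝ) (w : ℂ) : ‖Complex.exp ((t : ℂ) * Complex.I) * w‖ = ‖w‖ := by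
  rw [norm_mul, Complex.norm_exp_ofReal_mul_I, one_mul]

lemma vFT_continuous (b : SchwartzMap R3 ℝ) :
    Continuous fun p : ℝ × ℝ × ℝ => vFT b p.1 p.2.1 p.2.2 := by
  obtain ⟨C, hC, h⟩ := schwartz_decay' b
  unfold vFT FT1
  refine continuous_of_dominated (bound := fun z => C * (1 + z ^ 2)⁻¹) (fun p => ?_) (fun p => ?_)
    (integrable_inv_one_add_sq.const_mul C) (Eventually.of_forall fun z => ?_)
  · exact (Continuous.mul (by fun_prop) (slice_cont b _ _)).aestronglyMeasurable
  · refine Eventually.of_forall fun z => ?_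
    rw [norm_phase_mul]
    simpa using h p.1 p.2.1 z
  · refine Continuous.mul (by fun_prop) (continuous_ofReal.comp (b.continuous.comp ?_))
    simp only [v3_eq]
    fun_prop

/-- Differentiation under the Fourier integral along a horizontal path `t ↦ (u t, v t)`. -/
lemma vFT_hasDerivAt (b c : SchwartzMap R3 ℝ) (u v : ℝ → ℝ)
    (hb : ∀ t z, HasDerivAt (fun t => b (v3 (u t) (v t) z)) (c (v3 (u t) (v t) z)) t) (t ξ : ℝ) :
    HasDerivAt (fun t => vFT b (u t) (v t) ξ) (vFT c (u t) (v t) ξ) t := by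
  obtain ⟨C, hC, h⟩ := schwartz_decay' c
  refine (hasDerivAt_integral_of_dominated_loc_of_deriv_le (𝕜 := ℝ) (μ := volume) (s := Set.univ)
    (F := fun t z => Complex.exp ((-(2 * π * z * ξ) : ℝ) * Complex.I) * (b (v3 (u t) (v t) z) : ℂ))
    (F' := fun t z => Complex.exp ((-(2 * π * z * ξ) : ℝ) * Complex.I) * (c (v3 (u t) (v t) z) : ℂ))
    (bound := fun z => C * (1 + z ^ 2)⁻¹) univ_mem ?_ ?_ ?_ ?_
    (integrable_inv_one_add_sq.const_mul C) ?_).2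
  · exact Eventually.of_forall fun t =>
      (Continuous.mul (by fun_prop) (slice_cont b _ _)).aestronglyMeasurable
  · refine (slice_integrable b (u t) (v t)).mono
      (Continuous.mul (by fun_prop) (slice_cont b _ _)).aestronglyMeasurable
      (Eventually.of_forall fun z => ?_)
    rw [norm_phase_mul]
  · exact (Continuous.mul (by fun_prop) (slice_cont _ _ _)).aestronglyMeasurable
  · refine Eventually.of_forall fun z t _ => ?_
    rw [norm_phase_mul]
    simpa using h (u t) (v t) z
  · exact Eventually.of_forall fun z t _ => ((hb t z).ofReal_comp).const_mul _

lemma vFT_hasDerivAt_x (b : SchwartzMap R3 ℝ) (x y ξ : ℝ) :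
    HasDerivAt (fun x => vFT b x y ξ) (vFT (dS 0 b) x y ξ) x :=
  vFT_hasDerivAt b _ (fun x => x) (fun _ => y) (fun x z => hasDerivAt_x b x y z) x ξ

lemma vFT_hasDerivAt_y (b : SchwartzMap R3 ℝ) (x y ξ : ℝ) :
    HasDerivAt (fun y => vFT b x y ξ) (vFT (dS 1 b) x y ξ) y :=
  vFT_hasDerivAt b _ (fun _ => x) (fun y => y) (fun y z => hasDerivAt_y b x y z) y ξ

lemma FT1_eq (f : ℝ → ℂ) : FT1 f = FourierTransform.fourier f := by
  ext ξ
  rw [FT1, Real.fourier_eq']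
  simp only [smul_eq_mul]
  congr 1
  ext x
  congr 3
  simp
  ring

lemma vFT_dz (b : SchwartzMap R3 ℝ) (x y ξ : ℝ) :
    vFT (dS 2 b) x y ξ = (2 * π * I * ξ) * vFT b x y ξ := by
  have hd : ∀ z, HasDerivAt (fun z => ((b (v3 x y z) : ℝ) : ℂ)) (dS 2 b (v3 x y z) : ℂ) z :=
    fun z => (hasDerivAt_z b x y z).ofReal_comp
  have e : deriv (fun z => ((b (v3 x y z) : ℝ) : ℂ)) = fun z => (dS 2 b (v3 x y z) : ℂ) :=
    funext fun z => (hd z).deriv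
  have := Real.fourier_deriv (slice_integrable b x y) (fun z => (hd z).differentiableAt)
    (by rw [e]; exact slice_integrable _ x y)
  rw [e, ← FT1_eq, ← FT1_eq] at this
  simpa [vFT] using congrFun this ξ

/-- One factor `1 + ξ²` is traded for the operator `1 - (4π²)⁻¹ ∂₃²` on Schwartz functions. -/
lemma vFT_weight (b : SchwartzMap R3 ℝ) : ∃ c : SchwartzMap R3 ℝ, ∀ x y ξ,
    vFT c x y ξ = (1 + ξ ^ 2) * vFT b x y ξ := by
  refine ⟨b - (4 * π ^ 2)⁻¹ • dS 2 (dS 2 b), fun x y ξ => ?_⟩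
  have h2 := vFT_dz (dS 2 b) x y ξ
  rw [vFT_dz b] at h2
  have hp : (π : ℂ) ≠ 0 := by exact_mod_cast Real.pi_ne_zero
  have : vFT ⇑(b - (4 * π ^ 2)⁻¹ • dS 2 (dS 2 b) : SchwartzMap R3 ℝ) x y ξ
      = vFT b x y ξ - ((4 * π ^ 2)⁻¹ : ℂ) * vFT (dS 2 (dS 2 b)) x y ξ := by
    have hi : ∀ c : SchwartzMap R3 ℝ, Integrable fun z : ℝ =>
        Complex.exp ((-(2 * π * z * ξ) : ℝ) * Complex.I) * (c (v3 x y z) : ℂ) := fun c => by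
      refine (slice_integrable c x y).mono
        (Continuous.mul (by fun_prop) (slice_cont c _ _)).aestronglyMeasurable
        (Eventually.of_forall fun z => ?_)
      rw [norm_phase_mul]
    unfold vFT FT1
    rw [← integral_const_mul, ← integral_sub (hi b) ((hi _).const_mul _)]
    congr 1
    ext z
    simp
    ring
  rw [this, h2]
  field_simp
  linear_combination (-4 * ξ ^ 2 * vFT b x y ξ) * I_sq

lemma vFT_weight_pow (b : SchwartzMap R3 ℝ) (n : ℕ) : ∃ c : SchwartzMap R3 ℝ, ∀ x y ξ,
    vFT c x y ξ = (1 + ξ ^ 2) ^ n * vFT b x y ξ := by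
  induction n with
  | zero => exact ⟨b, by simp⟩
  | succ n ih =>
    obtain ⟨c, hc⟩ := ih
    obtain ⟨d, hd⟩ := vFT_weight c
    exact ⟨d, fun x y ξ => by rw [hd, hc]; ring⟩

lemma vFT_bound (b : SchwartzMap R3 ℝ) : ∃ C : ℝ, 0 ≤ C ∧ ∀ x y ξ : ℝ,
    (1 + x ^ 2) * (1 + y ^ 2) * ‖vFT b x y ξ‖ ≤ C := by
  obtain ⟨C, hC, h⟩ := schwartz_decay b
  refine ⟨C * ∫ z : ℝ, (1 + z ^ 2)⁻¹, mul_nonneg hC (integral_nonneg fun z => by positivity),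
    fun x y ξ => ?_⟩
  have h1 : ‖vFT b x y ξ‖ ≤ ∫ z : ℝ, |b (v3 x y z)| := by
    refine (norm_integral_le_integral_norm _).trans_eq ?_
    congr 1
    ext z
    rw [norm_phase_mul]
    simp
  calc _ ≤ (1 + x ^ 2) * (1 + y ^ 2) * ∫ z : ℝ, |b (v3 x y z)| := by gcongr
    _ = ∫ z : ℝ, (1 + x ^ 2) * (1 + y ^ 2) * |b (v3 x y z)| := (integral_const_mul _ _).symm
    _ ≤ ∫ z : ℝ, C * (1 + z ^ 2)⁻¹ := by
        refine integral_mono ?_ (integrable_inv_one_add_sq.const_mul C) (fun z => h x y z)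
        have := (slice_integrable b x y).norm
        simp only [Complex.norm_real, Real.norm_eq_abs] at this
        exact this.const_mul _
    _ = _ := integral_const_mul _ _

/-- Joint decay of the partial Fourier transform, to any order in `ξ`. -/
lemma vFT_decay (b : SchwartzMap R3 ℝ) (n : ℕ) : ∃ C : ℝ, 0 ≤ C ∧ ∀ x y ξ : ℝ,
    ‖vFT b x y ξ‖ ≤ C * ((1 + x ^ 2)⁻¹ * ((1 + y ^ 2)⁻¹ * ((1 + ξ ^ 2) ^ n)⁻¹)) := by
  obtain ⟨c, hc⟩ := vFT_weight_pow b n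
  obtain ⟨C, hC, h⟩ := vFT_bound c
  refine ⟨C, hC, fun x y ξ => ?_⟩
  have := h x y ξ
  rw [hc, norm_mul] at this
  have e : ‖((1 : ℂ) + (ξ : ℂ) ^ 2) ^ n‖ = (1 + ξ ^ 2) ^ n := by
    have : ((1 : ℂ) + (ξ : ℂ) ^ 2) ^ n = (((1 + ξ ^ 2) ^ n : ℝ) : ℂ) := by push_cast; rfl
    rw [this, Complex.norm_real, Real.norm_of_nonneg (by positivity)]
  rw [e] at this
  rw [← mul_inv, ← mul_inv, ← div_eq_mul_inv, le_div_iff₀ (by positivity)]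
  linarith

/-! ### Slice norms and the one-dimensional estimate -/

/-- The Sobolev weight `(1 + ξ²)^s`, valued in `ℝ≥0∞`. -/
def wE (s ξ : ℝ) : ℝ≥0∞ := ENNReal.ofReal ((1 + ξ ^ 2) ^ s)

/-- The squared `H^s` norm of the vertical slice `b(x, y, ·)`, valued in `ℝ≥0∞`. -/
def nSq (s : ℝ) (b : R3 → ℝ) (x y : ℝ) : ℝ≥0∞ := ∫⁻ ξ, wE s ξ * ‖vFT b x y ξ‖ₑ ^ 2

/-- The squared `L²_h(H^s)_v` norm, valued in `ℝ≥0∞`. -/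
def tSq (s : ℝ) (b : R3 → ℝ) : ℝ≥0∞ := ∫⁻ x, ∫⁻ y, nSq s b x y

/-- The weighted pairing `∫ (1 + ξ²)^s |b̂| |ĉ| dξ` of two vertical slices. -/
def pairE (s : ℝ) (b c : R3 → ℝ) (x y : ℝ) : ℝ≥0∞ :=
  ∫⁻ ξ, wE s ξ * (‖vFT b x y ξ‖ₑ * ‖vFT c x y ξ‖ₑ)

lemma measurable_wE (s : ℝ) : Measurable (wE s) := by
  unfold wE
  fun_prop

lemma wE_mul (s t ξ : ℝ) : wE s ξ * wE t ξ = wE (s + t) ξ := by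
  unfold wE
  rw [← ENNReal.ofReal_mul (by positivity), ← Real.rpow_add (by positivity)]

lemma measurable_vFT (b : SchwartzMap R3 ℝ) :
    Measurable fun p : ℝ × ℝ × ℝ => ‖vFT b p.1 p.2.1 p.2.2‖ₑ :=
  (vFT_continuous b).measurable.enorm

lemma measurable_vFT_comp {α : Type*} [MeasurableSpace α] (b : SchwartzMap R3 ℝ) {f g h : α → ℝ}
    (hf : Measurable f) (hg : Measurable g) (hh : Measurable h) :
    Measurable fun p => ‖vFT b (f p) (g p) (h p)‖ₑ :=
  Measurable.comp (g := fun p : ℝ × ℝ × ℝ => ‖vFT b p.1 p.2.1 p.2.2‖ₑ)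
    (f := fun p => (f p, g p, h p)) (measurable_vFT b) (hf.prodMk (hg.prodMk hh))

lemma measurable_nSq (s : ℝ) (b : SchwartzMap R3 ℝ) :
    Measurable fun p : ℝ × ℝ => nSq s b p.1 p.2 := by
  unfold nSq
  refine Measurable.lintegral_prod_right' (f := fun q : (ℝ × ℝ) × ℝ =>
    wE s q.2 * ‖vFT b q.1.1 q.1.2 q.2‖ₑ ^ 2) ?_
  exact ((measurable_wE s).comp measurable_snd).mul
    ((measurable_vFT_comp b (by fun_prop) (by fun_prop) (by fun_prop)).pow_const 2)

lemma measurable_pairE (s : ℝ) (b c : SchwartzMap R3 ℝ) :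
    Measurable fun p : ℝ × ℝ => pairE s b c p.1 p.2 := by
  unfold pairE
  refine Measurable.lintegral_prod_right' (f := fun q : (ℝ × ℝ) × ℝ =>
    wE s q.2 * (‖vFT b q.1.1 q.1.2 q.2‖ₑ * ‖vFT c q.1.1 q.1.2 q.2‖ₑ)) ?_
  exact ((measurable_wE s).comp measurable_snd).mul
    ((measurable_vFT_comp b (by fun_prop) (by fun_prop) (by fun_prop)).mul
      (measurable_vFT_comp c (by fun_prop) (by fun_prop) (by fun_prop)))

lemma lintegral_cauchy_schwarz {α : Type*} [MeasurableSpace α] (μ : Measure α) {f g : α → ℝ≥0∞}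
    (hf : AEMeasurable f μ) (hg : AEMeasurable g μ) :
    (∫⁻ a, f a * g a ∂μ) ^ 2 ≤ (∫⁻ a, f a ^ 2 ∂μ) * ∫⁻ a, g a ^ 2 ∂μ := by
  have h := ENNReal.lintegral_mul_le_Lp_mul_Lq μ Real.HolderConjugate.two_two hf hg
  simp only [ENNReal.rpow_two, Pi.mul_apply] at h
  calc _ ≤ ((∫⁻ a, f a ^ 2 ∂μ) ^ (1 / (2 : ℝ)) * (∫⁻ a, g a ^ 2 ∂μ) ^ (1 / (2 : ℝ))) ^ 2 := by
        gcongr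
    _ = _ := by
        rw [mul_pow, ← ENNReal.rpow_mul_natCast, ← ENNReal.rpow_mul_natCast]
        norm_num

/-- The one-dimensional estimate `|g(x)|² ≤ 2 ∫ |g| |g'|`, valid as soon as `g → 0` at `-∞`. -/
lemma enorm_sq_le_lintegral {g g' : ℝ → ℂ} (hd : ∀ t, HasDerivAt g (g' t) t) (hc : Continuous g')
    (h0 : Tendsto g atBot (𝓝 0)) (x : ℝ) : ‖g x‖ₑ ^ 2 ≤ 2 * ∫⁻ t, ‖g t‖ₑ * ‖g' t‖ₑ := by
  have hgc : Continuous g := continuous_iff_continuousAt.2 fun t => (hd t).continuousAt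
  have hD : ∀ t, HasDerivAt (fun t => ‖g t‖ ^ 2) (2 * inner ℝ (g t) (g' t)) t :=
    fun t => (hd t).norm_sq
  have hle : ∀ t, ‖2 * inner ℝ (g t) (g' t)‖ₑ ≤ 2 * (‖g t‖ₑ * ‖g' t‖ₑ) := by
    intro t
    rw [enorm_mul]
    have h2 : ‖(2 : ℝ)‖ₑ = 2 := by
      rw [Real.enorm_eq_ofReal (by norm_num)]
      simp
    rw [h2]
    gcongr
    rw [← ofReal_norm, ← ofReal_norm, ← ofReal_norm, ← ENNReal.ofReal_mul (norm_nonneg _)]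
    exact ENNReal.ofReal_le_ofReal (norm_inner_le_norm _ _)
  have hI : ∫⁻ t, ‖2 * inner ℝ (g t) (g' t)‖ₑ ≤ 2 * ∫⁻ t, ‖g t‖ₑ * ‖g' t‖ₑ := by
    have hm : Measurable fun t => ‖g t‖ₑ * ‖g' t‖ₑ :=
      hgc.measurable.enorm.mul hc.measurable.enorm
    rw [← lintegral_const_mul _ hm]
    exact lintegral_mono hle
  rcases eq_or_ne (2 * ∫⁻ t, ‖g t‖ₑ * ‖g' t‖ₑ) ⊤ with htop | htop
  · rw [htop]
    exact le_top
  have hint : Integrable fun t => 2 * inner ℝ (g t) (g' t) :=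
    ⟨(by fun_prop : Continuous fun t => 2 * inner ℝ (g t) (g' t)).aestronglyMeasurable,
      lt_of_le_of_lt hI htop.lt_top⟩
  have hlim : Tendsto (fun t => ‖g t‖ ^ 2) atBot (𝓝 0) := by
    simpa using (h0.norm.pow 2)
  have key := integral_Iic_of_hasDerivAt_of_tendsto' (a := x) (fun t _ => hD t)
    hint.integrableOn hlim
  rw [sub_zero] at key
  calc ‖g x‖ₑ ^ 2 = ‖‖g x‖ ^ 2‖ₑ := by rw [enorm_pow, enorm_norm]
    _ = ‖∫ t in Set.Iic x, 2 * inner ℝ (g t) (g' t)‖ₑ := by rw [key]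
    _ ≤ ∫⁻ t in Set.Iic x, ‖2 * inner ℝ (g t) (g' t)‖ₑ := enorm_integral_le_lintegral_enorm _
    _ ≤ ∫⁻ t, ‖2 * inner ℝ (g t) (g' t)‖ₑ := setLIntegral_le_lintegral _ _
    _ ≤ _ := hI

lemma tendsto_of_decay {g : ℝ → ℂ} {C : ℝ} (h : ∀ t, ‖g t‖ ≤ C * (1 + t ^ 2)⁻¹) :
    Tendsto g atBot (𝓝 0) := by
  refine squeeze_zero_norm h ?_
  have h1 : Tendsto (fun t : ℝ => 1 + t ^ 2) atBot atTop :=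
    tendsto_atTop_add_const_left _ _ (by
      simpa [Function.comp_def, sq_abs] using (tendsto_pow_atTop two_ne_zero).comp (tendsto_abs_atBot_atTop (G := ℝ)))
  simpa using h1.inv_tendsto_atTop.const_mul C

/-! ### Ladyzhenskaya's inequality for the slice norm -/

/-- Along a horizontal path, the one-dimensional estimate holds at each frequency `ξ`; it is
integrated against `(1 + ξ²)^s`, and Tonelli exchanges the two integrals. -/
lemma nSq_le_path (s : ℝ) (b c : SchwartzMap R3 ℝ) {u v : ℝ → ℝ} (hu : Continuous u)
    (hv : Continuous v)
    (hd : ∀ t ξ, HasDerivAt (fun t => vFT b (u t) (v t) ξ) (vFT c (u t) (v t) ξ) t)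
    {C : ℝ} (hC : ∀ t ξ, ‖vFT b (u t) (v t) ξ‖ ≤ C * (1 + t ^ 2)⁻¹) (t₀ : ℝ) :
    nSq s b (u t₀) (v t₀) ≤ 2 * ∫⁻ t, pairE s b c (u t) (v t) := by
  have hp : ∀ ξ, ‖vFT b (u t₀) (v t₀) ξ‖ₑ ^ 2
      ≤ 2 * ∫⁻ t, ‖vFT b (u t) (v t) ξ‖ₑ * ‖vFT c (u t) (v t) ξ‖ₑ := fun ξ =>
    enorm_sq_le_lintegral (g := fun t => vFT b (u t) (v t) ξ) (fun t => hd t ξ)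
      ((vFT_continuous c).comp (by fun_prop : Continuous fun t : ℝ => (u t, v t, ξ)))
      (tendsto_of_decay fun t => hC t ξ) t₀
  have hm : Measurable fun q : ℝ × ℝ =>
      ‖vFT b (u q.2) (v q.2) q.1‖ₑ * ‖vFT c (u q.2) (v q.2) q.1‖ₑ :=
    (measurable_vFT_comp b (by fun_prop) (by fun_prop) (by fun_prop)).mul
      (measurable_vFT_comp c (by fun_prop) (by fun_prop) (by fun_prop))
  have hm₁ : ∀ ξ, Measurable fun t => ‖vFT b (u t) (v t) ξ‖ₑ * ‖vFT c (u t) (v t) ξ‖ₑ :=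
    fun ξ => (measurable_vFT_comp b (by fun_prop) (by fun_prop) (by fun_prop)).mul
      (measurable_vFT_comp c (by fun_prop) (by fun_prop) (by fun_prop))
  have hm' : Measurable fun q : ℝ × ℝ =>
      wE s q.1 * (‖vFT b (u q.2) (v q.2) q.1‖ₑ * ‖vFT c (u q.2) (v q.2) q.1‖ₑ) :=
    ((measurable_wE s).comp measurable_fst).mul hm
  calc nSq s b (u t₀) (v t₀)
      ≤ ∫⁻ ξ, wE s ξ * (2 * ∫⁻ t, ‖vFT b (u t) (v t) ξ‖ₑ * ‖vFT c (u t) (v t) ξ‖ₑ) :=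
        lintegral_mono fun ξ => by gcongr; exact hp ξ
    _ = ∫⁻ ξ, 2 * ∫⁻ t, wE s ξ * (‖vFT b (u t) (v t) ξ‖ₑ * ‖vFT c (u t) (v t) ξ‖ₑ) := by
        congr 1
        ext ξ
        rw [lintegral_const_mul _ (hm₁ ξ), mul_left_comm]
    _ = 2 * ∫⁻ ξ, ∫⁻ t, wE s ξ * (‖vFT b (u t) (v t) ξ‖ₑ * ‖vFT c (u t) (v t) ξ‖ₑ) :=
        lintegral_const_mul _ hm'.lintegral_prod_right'
    _ = _ := by
        rw [lintegral_lintegral_swap (f := fun ξ t =>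
          wE s ξ * (‖vFT b (u t) (v t) ξ‖ₑ * ‖vFT c (u t) (v t) ξ‖ₑ)) hm'.aemeasurable]
        simp only [pairE]

lemma nSq_le_x (s : ℝ) (b : SchwartzMap R3 ℝ) (x y : ℝ) :
    nSq s b x y ≤ 2 * ∫⁻ t, pairE s b (dS 0 b) t y := by
  obtain ⟨C, hC, h⟩ := vFT_bound b
  refine nSq_le_path s b (dS 0 b) (u := fun t => t) (v := fun _ => y) (by fun_prop) (by fun_prop)
    (fun t ξ => vFT_hasDerivAt_x b t y ξ) (C := C) (fun t ξ => ?_) x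
  rw [← div_eq_mul_inv, le_div_iff₀ (by positivity)]
  have := h t y ξ
  nlinarith [mul_nonneg (mul_nonneg (by positivity : 0 ≤ 1 + t ^ 2) (sq_nonneg y))
    (norm_nonneg (vFT b t y ξ))]

lemma nSq_le_y (s : ℝ) (b : SchwartzMap R3 ℝ) (x y : ℝ) :
    nSq s b x y ≤ 2 * ∫⁻ t, pairE s b (dS 1 b) x t := by
  obtain ⟨C, hC, h⟩ := vFT_bound b
  refine nSq_le_path s b (dS 1 b) (u := fun _ => x) (v := fun t => t) (by fun_prop) (by fun_prop)
    (fun t ξ => vFT_hasDerivAt_y b x t ξ) (C := C) (fun t ξ => ?_) y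
  rw [← div_eq_mul_inv, le_div_iff₀ (by positivity)]
  have := h x t ξ
  nlinarith [mul_nonneg (mul_nonneg (by positivity : 0 ≤ 1 + t ^ 2) (sq_nonneg x))
    (norm_nonneg (vFT b x t ξ))]

lemma lintegral3 {f : ℝ × ℝ × ℝ → ℝ≥0∞} (hf : Measurable f) :
    ∫⁻ p, f p = ∫⁻ x, ∫⁻ y, ∫⁻ ξ, f (x, y, ξ) := by
  rw [Measure.volume_eq_prod, lintegral_prod _ hf.aemeasurable]
  congr 1
  ext x
  have hx : Measurable fun q : ℝ × ℝ => f (x, q) := hf.comp measurable_prodMk_left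
  rw [Measure.volume_eq_prod, lintegral_prod _ hx.aemeasurable]

/-- Cauchy–Schwarz on `ℝ³`, the weight being split evenly between the two factors. -/
lemma pairE_total_sq_le (s : ℝ) (b c : SchwartzMap R3 ℝ) :
    (∫⁻ x, ∫⁻ y, pairE s b c x y) ^ 2 ≤ tSq s b * tSq s c := by
  have hw : Measurable fun p : ℝ × ℝ × ℝ => wE (s / 2) p.2.2 :=
    (measurable_wE _).comp (by fun_prop)
  have hF : ∀ d : SchwartzMap R3 ℝ, Measurable fun p : ℝ × ℝ × ℝ =>
      wE (s / 2) p.2.2 * ‖vFT d p.1 p.2.1 p.2.2‖ₑ := fun d => hw.mul (measurable_vFT d)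
  have hh : ∀ ξ, wE (s / 2) ξ * wE (s / 2) ξ = wE s ξ := fun ξ => by
    rw [wE_mul, add_halves]
  have h := lintegral_cauchy_schwarz volume (hF b).aemeasurable (hF c).aemeasurable
  have hbc : Measurable fun p : ℝ × ℝ × ℝ => wE (s / 2) p.2.2 * ‖vFT b p.1 p.2.1 p.2.2‖ₑ *
      (wE (s / 2) p.2.2 * ‖vFT c p.1 p.2.1 p.2.2‖ₑ) := (hF b).mul (hF c)
  rw [lintegral3 hbc, lintegral3 ((hF b).pow_const 2), lintegral3 ((hF c).pow_const 2)] at h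
  have e : ∀ d : SchwartzMap R3 ℝ, ∀ x y ξ : ℝ, (wE (s / 2) ξ * ‖vFT d x y ξ‖ₑ) ^ 2
      = wE s ξ * ‖vFT d x y ξ‖ₑ ^ 2 := fun d x y ξ => by rw [mul_pow, sq (wE _ _), hh]
  have e' : ∀ x y ξ : ℝ, wE (s / 2) ξ * ‖vFT b x y ξ‖ₑ * (wE (s / 2) ξ * ‖vFT c x y ξ‖ₑ)
      = wE s ξ * (‖vFT b x y ξ‖ₑ * ‖vFT c x y ξ‖ₑ) := fun x y ξ => by
    rw [← hh]
    ring
  simp only [e, e'] at h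
  exact h

/-- Ladyzhenskaya's inequality `‖N‖_{L⁴}⁴ ≤ 4 ‖b‖² ‖∇_h b‖²`, where `N(x, y)` is the `H^s` norm of
the slice `b(x, y, ·)` and the norms on the right are those of `L²_h(H^s)_v`. -/
lemma ladyzhenskaya (s : ℝ) (b : SchwartzMap R3 ℝ) :
    ∫⁻ x, ∫⁻ y, nSq s b x y ^ 2 ≤ 4 * (tSq s b * (tSq s (dS 0 b) + tSq s (dS 1 b))) := by
  set A₀ := ∫⁻ x, ∫⁻ y, pairE s b (dS 0 b) x y with hA₀
  set A₁ := ∫⁻ x, ∫⁻ y, pairE s b (dS 1 b) x y with hA₁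
  have hm₀ : Measurable fun p : ℝ × ℝ => pairE s b (dS 0 b) p.2 p.1 :=
    Measurable.comp (g := fun p : ℝ × ℝ => pairE s b (dS 0 b) p.1 p.2) (f := Prod.swap)
      (measurable_pairE s b (dS 0 b)) measurable_swap
  have hm₁ := measurable_pairE s b (dS 1 b)
  have h1 : ∫⁻ x, ∫⁻ y, nSq s b x y ^ 2 ≤ 4 * (A₀ * A₁) := by
    calc ∫⁻ x, ∫⁻ y, nSq s b x y ^ 2
        ≤ ∫⁻ x, ∫⁻ y, 4 * ((∫⁻ t, pairE s b (dS 1 b) x t) * ∫⁻ t, pairE s b (dS 0 b) t y) := by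
          refine lintegral_mono fun x => lintegral_mono fun y => ?_
          calc nSq s b x y ^ 2 = nSq s b x y * nSq s b x y := sq _
            _ ≤ (2 * ∫⁻ t, pairE s b (dS 1 b) x t) * (2 * ∫⁻ t, pairE s b (dS 0 b) t y) :=
              mul_le_mul' (nSq_le_y s b x y) (nSq_le_x s b x y)
            _ = _ := by ring
      _ = 4 * ((∫⁻ x, ∫⁻ t, pairE s b (dS 1 b) x t) * ∫⁻ y, ∫⁻ t, pairE s b (dS 0 b) t y) := by
          have hy : Measurable fun y => ∫⁻ t, pairE s b (dS 0 b) t y := hm₀.lintegral_prod_right'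
          have hx : Measurable fun x => ∫⁻ t, pairE s b (dS 1 b) x t := hm₁.lintegral_prod_right'
          simp_rw [lintegral_const_mul _ (hy.const_mul _), lintegral_const_mul _ hy]
          rw [lintegral_const_mul _ (hx.mul_const _), lintegral_mul_const _ hx]
      _ = _ := by
          rw [hA₀, lintegral_lintegral_swap (f := fun y t => pairE s b (dS 0 b) t y)
            hm₀.aemeasurable, mul_comm A₁]
  refine h1.trans (mul_le_mul' le_rfl ?_)
  suffices h : (A₀ * A₁) ^ 2 ≤ (tSq s b * (tSq s (dS 0 b) + tSq s (dS 1 b))) ^ 2 from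
    (ENNReal.pow_right_strictMono two_ne_zero).le_iff_le.1 h
  calc (A₀ * A₁) ^ 2 = A₀ ^ 2 * A₁ ^ 2 := mul_pow _ _ _
    _ ≤ (tSq s b * tSq s (dS 0 b)) * (tSq s b * tSq s (dS 1 b)) :=
      mul_le_mul' (pairE_total_sq_le s b _) (pairE_total_sq_le s b _)
    _ ≤ (tSq s b * (tSq s (dS 0 b) + tSq s (dS 1 b)))
        * (tSq s b * (tSq s (dS 0 b) + tSq s (dS 1 b))) := by
      gcongr
      · exact le_self_add
      · exact le_add_self
    _ = _ := (sq _).symm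

lemma lintegral_inv_one_add_sq_lt_top : ∫⁻ t : ℝ, ENNReal.ofReal ((1 + t ^ 2)⁻¹) < ⊤ := by
  have := integrable_inv_one_add_sq.lintegral_lt_top
  exact this

/-- Slice norms decay horizontally, whatever the size of `s`: `b̂` decays faster in `ξ` than any
power. This makes both sides of the `ℝ≥0∞` estimates finite. -/
lemma nSq_bound (s : ℝ) (b : SchwartzMap R3 ℝ) : ∃ M : ℝ≥0∞, M < ⊤ ∧ ∀ x y,
    nSq s b x y ≤ M * (ENNReal.ofReal ((1 + x ^ 2)⁻¹) * ENNReal.ofReal ((1 + y ^ 2)⁻¹)) := by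
  obtain ⟨n, hn⟩ := exists_nat_ge s
  obtain ⟨C, hC, h⟩ := vFT_decay b (n + 1)
  refine ⟨ENNReal.ofReal (C ^ 2) * ∫⁻ t : ℝ, ENNReal.ofReal ((1 + t ^ 2)⁻¹),
    ENNReal.mul_lt_top ENNReal.ofReal_lt_top lintegral_inv_one_add_sq_lt_top, fun x y => ?_⟩
  have hp : ∀ ξ, wE s ξ * ‖vFT b x y ξ‖ₑ ^ 2 ≤ (ENNReal.ofReal (C ^ 2) *
      (ENNReal.ofReal ((1 + x ^ 2)⁻¹) * ENNReal.ofReal ((1 + y ^ 2)⁻¹))) *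
      ENNReal.ofReal ((1 + ξ ^ 2)⁻¹) := by
    intro ξ
    rw [wE, ← ofReal_norm, ← ENNReal.ofReal_pow (norm_nonneg _),
      ← ENNReal.ofReal_mul (by positivity), ← ENNReal.ofReal_mul (by positivity),
      ← ENNReal.ofReal_mul (by positivity), ← ENNReal.ofReal_mul (by positivity)]
    refine ENNReal.ofReal_le_ofReal ?_
    have hx : (1 + x ^ 2)⁻¹ ≤ 1 := inv_le_one_of_one_le₀ (le_add_of_nonneg_right (sq_nonneg x))
    have hy : (1 + y ^ 2)⁻¹ ≤ 1 := inv_le_one_of_one_le₀ (le_add_of_nonneg_right (sq_nonneg y))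
    have hr : (1 + ξ ^ 2)⁻¹ ≤ 1 := inv_le_one_of_one_le₀ (le_add_of_nonneg_right (sq_nonneg ξ))
    have hw : (1 + ξ ^ 2) ^ s ≤ (1 + ξ ^ 2) ^ n := by
      rw [← Real.rpow_natCast (1 + ξ ^ 2) n]
      exact Real.rpow_le_rpow_of_exponent_le (le_add_of_nonneg_right (sq_nonneg ξ)) hn
    have hξ0 : 0 < 1 + ξ ^ 2 := by positivity
    set X := (1 + x ^ 2)⁻¹ with hX
    set Y := (1 + y ^ 2)⁻¹ with hY
    have hX0 : 0 ≤ X := by positivity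
    have hY0 : 0 ≤ Y := by positivity
    have hfin : (1 + ξ ^ 2) ^ n * (((1 + ξ ^ 2) ^ (n + 1))⁻¹) ^ 2 ≤ (1 + ξ ^ 2)⁻¹ := by
      have e : (1 + ξ ^ 2) ^ n * (((1 + ξ ^ 2) ^ (n + 1))⁻¹) ^ 2
          = (1 + ξ ^ 2)⁻¹ * ((1 + ξ ^ 2)⁻¹) ^ (n + 1) := by
        rw [eq_comm, inv_pow]
        field_simp
        ring
      rw [e]
      exact mul_le_of_le_one_right (by positivity) (pow_le_one₀ (by positivity) hr)
    calc (1 + ξ ^ 2) ^ s * ‖vFT b x y ξ‖ ^ 2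
        ≤ (1 + ξ ^ 2) ^ n * (C * (X * (Y * ((1 + ξ ^ 2) ^ (n + 1))⁻¹))) ^ 2 := by
          gcongr
          exact h x y ξ
      _ = C ^ 2 * ((X * X) * (Y * Y)) *
          ((1 + ξ ^ 2) ^ n * (((1 + ξ ^ 2) ^ (n + 1))⁻¹) ^ 2) := by ring
      _ ≤ C ^ 2 * ((X * 1) * (Y * 1)) * (1 + ξ ^ 2)⁻¹ := by gcongr
      _ = _ := by ring
  calc nSq s b x y ≤ _ := lintegral_mono hp
    _ = _ := by
      rw [lintegral_const_mul _ (by fun_prop)]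
      ring

lemma nSq_lt_top (s : ℝ) (b : SchwartzMap R3 ℝ) (x y : ℝ) : nSq s b x y < ⊤ := by
  obtain ⟨M, hM, h⟩ := nSq_bound s b
  exact (h x y).trans_lt (ENNReal.mul_lt_top hM
    (ENNReal.mul_lt_top ENNReal.ofReal_lt_top ENNReal.ofReal_lt_top))

lemma tSq_lt_top (s : ℝ) (b : SchwartzMap R3 ℝ) : tSq s b < ⊤ := by
  obtain ⟨M, hM, h⟩ := nSq_bound s b
  have hm : Measurable fun t : ℝ => ENNReal.ofReal ((1 + t ^ 2)⁻¹) := by fun_prop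
  calc tSq s b ≤ ∫⁻ x, ∫⁻ y, M * (ENNReal.ofReal ((1 + x ^ 2)⁻¹)
        * ENNReal.ofReal ((1 + y ^ 2)⁻¹)) :=
        lintegral_mono fun x => lintegral_mono fun y => h x y
    _ = M * ((∫⁻ t : ℝ, ENNReal.ofReal ((1 + t ^ 2)⁻¹))
        * ∫⁻ t : ℝ, ENNReal.ofReal ((1 + t ^ 2)⁻¹)) := by
      simp_rw [lintegral_const_mul _ (hm.const_mul _), lintegral_const_mul _ hm]
      rw [lintegral_const_mul _ (hm.mul_const _), lintegral_mul_const _ hm]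
    _ < ⊤ := ENNReal.mul_lt_top hM (ENNReal.mul_lt_top lintegral_inv_one_add_sq_lt_top
        lintegral_inv_one_add_sq_lt_top)

/-! ### Sobolev embedding and the real-valued norms -/

/-- The constant `∫ (1 + ξ²)^(-s) dξ` of the embedding `H^s(ℝ) ⊆ L^∞(ℝ)`. -/
def kS (s : ℝ) : ℝ≥0∞ := ∫⁻ ξ, wE (-s) ξ

lemma kS_lt_top {s : ℝ} (hs : 1 / 2 < s) : kS s < ⊤ := by
  have h := integrable_rpow_neg_one_add_norm_sq (E := ℝ) (μ := volume) (r := 2 * s)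
    (by rw [Module.finrank_self]; push_cast; linarith)
  have h2 := h.lintegral_lt_top
  have e : -(2 * s) / 2 = -s := by ring
  simp only [Real.norm_eq_abs, sq_abs, e] at h2
  exact h2

lemma vFT_integrable (b : SchwartzMap R3 ℝ) (x y : ℝ) : Integrable fun ξ => vFT b x y ξ := by
  obtain ⟨C, hC, h⟩ := vFT_decay b 1
  refine (integrable_inv_one_add_sq.const_mul
    (C * ((1 + x ^ 2)⁻¹ * (1 + y ^ 2)⁻¹))).mono'
    ((vFT_continuous b).comp (by fun_prop : Continuous fun ξ : ℝ => (x, y, ξ))).aestronglyMeasurable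
    (Eventually.of_forall fun ξ => (h x y ξ).trans_eq ?_)
  rw [pow_one]
  ring

/-- The Sobolev embedding `‖b(x, y, ·)‖_{L^∞}² ≤ kS s * ‖b(x, y, ·)‖_{H^s}²`, by Fourier inversion
and the Cauchy–Schwarz inequality. -/
lemma sobolev_slice (s : ℝ) (b : SchwartzMap R3 ℝ) (x y z : ℝ) :
    ‖b (v3 x y z)‖ₑ ^ 2 ≤ kS s * nSq s b x y := by
  have hinv := (slice_cont b x y).fourierInv_fourier_eq (slice_integrable b x y)
    (by rw [← FT1_eq]; exact vFT_integrable b x y)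
  rw [← FT1_eq] at hinv
  have h1 : ‖b (v3 x y z)‖ₑ ≤ ∫⁻ ξ, ‖vFT b x y ξ‖ₑ := by
    have hz := congrFun hinv z
    rw [Real.fourierInv_eq'] at hz
    have e0 : ‖b (v3 x y z)‖ₑ = ‖((b (v3 x y z) : ℝ) : ℂ)‖ₑ := by
      rw [← ofReal_norm, ← ofReal_norm, Complex.norm_real]
    rw [e0, ← hz]
    refine (enorm_integral_le_lintegral_enorm _).trans_eq ?_
    congr 1
    ext ξ
    rw [← ofReal_norm, ← ofReal_norm, smul_eq_mul, norm_phase_mul]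
    rfl
  have hw := measurable_wE
  have hF : Measurable fun ξ => ‖vFT b x y ξ‖ₑ :=
    measurable_vFT_comp b (by fun_prop) (by fun_prop) (by fun_prop)
  have h2 := lintegral_cauchy_schwarz volume (hw (-s / 2)).aemeasurable
    ((hw (s / 2)).mul hF).aemeasurable
  have e1 : ∀ ξ, wE (-s / 2) ξ * (wE (s / 2) ξ * ‖vFT b x y ξ‖ₑ) = ‖vFT b x y ξ‖ₑ := fun ξ => by
    rw [← mul_assoc, wE_mul]
    have : -s / 2 + s / 2 = 0 := by ring
    rw [this]
    simp [wE]
  have e2 : ∀ ξ, wE (-s / 2) ξ ^ 2 = wE (-s) ξ := fun ξ => by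
    rw [sq, wE_mul, add_halves]
  have e3 : ∀ ξ, (wE (s / 2) ξ * ‖vFT b x y ξ‖ₑ) ^ 2 = wE s ξ * ‖vFT b x y ξ‖ₑ ^ 2 := fun ξ => by
    rw [mul_pow, sq (wE _ _), wE_mul, add_halves]
  simp only [Pi.mul_apply, e1, e2, e3] at h2
  exact (pow_le_pow_left' h1 2).trans h2

lemma vSliceNormSq_eq (s : ℝ) (b : SchwartzMap R3 ℝ) (p : R2) :
    vSliceNormSq s b p = (nSq s b (p 0) (p 1)).toReal := by
  have hc : Continuous fun ξ => vFT b (p 0) (p 1) ξ :=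
    (vFT_continuous b).comp (by fun_prop : Continuous fun ξ : ℝ => (p 0, p 1, ξ))
  have hw : Continuous fun ξ : ℝ => (1 + ξ ^ 2) ^ s :=
    (by fun_prop : Continuous fun ξ : ℝ => 1 + ξ ^ 2).rpow_const
      fun ξ => Or.inl (by positivity)
  have hwc : Continuous fun ξ : ℝ => (1 + ξ ^ 2) ^ s * ‖vFT b (p 0) (p 1) ξ‖ ^ 2 :=
    hw.mul (hc.norm.pow 2)
  change ∫ ξ : ℝ, (1 + ξ ^ 2) ^ s * ‖vFT b (p 0) (p 1) ξ‖ ^ 2 = _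
  rw [integral_eq_lintegral_of_nonneg_ae (Eventually.of_forall fun ξ => by positivity)
    hwc.aestronglyMeasurable]
  congr 1
  refine lintegral_congr fun ξ => ?_
  rw [wE, ← ofReal_norm, ← ENNReal.ofReal_pow (norm_nonneg _), ← ENNReal.ofReal_mul (by positivity)]

lemma lintegral_R2 {f : ℝ × ℝ → ℝ≥0∞} (hf : Measurable f) :
    ∫⁻ p : R2, f (p 0, p 1) = ∫⁻ x, ∫⁻ y, f (x, y) := by
  have h := (volume_preserving_finTwoArrow ℝ).comp (PiLp.volume_preserving_ofLp (Fin 2))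
  have := h.lintegral_comp hf
  rw [Measure.volume_eq_prod, lintegral_prod _ hf.aemeasurable] at this
  rw [← this]
  rfl

lemma measurable_nSq_R2 (s : ℝ) (b : SchwartzMap R3 ℝ) :
    Measurable fun p : R2 => nSq s b (p 0) (p 1) :=
  Measurable.comp (g := fun q : ℝ × ℝ => nSq s b q.1 q.2) (f := fun p : R2 => (p 0, p 1))
    (measurable_nSq s b) (by fun_prop)

lemma lintegral_nSq_R2 (s : ℝ) (b : SchwartzMap R3 ℝ) :
    ∫⁻ p : R2, nSq s b (p 0) (p 1) = tSq s b :=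
  lintegral_R2 (f := fun q => nSq s b q.1 q.2) (measurable_nSq s b)

lemma L2hHsv_eq (s : ℝ) (b : SchwartzMap R3 ℝ) : L2hHsv s b = √(tSq s b).toReal := by
  unfold L2hHsv
  simp_rw [vSliceNormSq_eq]
  rw [integral_toReal (measurable_nSq_R2 s b).aemeasurable
    (Eventually.of_forall fun p => nSq_lt_top s b _ _), lintegral_nSq_R2]

lemma gradhL2hHsv_eq (s : ℝ) (b : SchwartzMap R3 ℝ) :
    gradhL2hHsv s b = √(tSq s (dS 0 b) + tSq s (dS 1 b)).toReal := by
  unfold gradhL2hHsv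
  simp_rw [← dS_apply, vSliceNormSq_eq]
  have e : ∀ p : R2, (nSq s (dS 0 b) (p 0) (p 1)).toReal + (nSq s (dS 1 b) (p 0) (p 1)).toReal
      = (nSq s (dS 0 b) (p 0) (p 1) + nSq s (dS 1 b) (p 0) (p 1)).toReal := fun p =>
    (ENNReal.toReal_add (nSq_lt_top _ _ _ _).ne (nSq_lt_top _ _ _ _).ne).symm
  have hm : Measurable fun p : R2 => nSq s (dS 0 b) (p 0) (p 1) + nSq s (dS 1 b) (p 0) (p 1) :=
    (measurable_nSq_R2 s _).add (measurable_nSq_R2 s _)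
  simp_rw [e]
  rw [integral_toReal hm.aemeasurable
    (Eventually.of_forall fun p => ENNReal.add_lt_top.2 ⟨nSq_lt_top _ _ _ _, nSq_lt_top _ _ _ _⟩),
    lintegral_add_left (measurable_nSq_R2 s _), lintegral_nSq_R2, lintegral_nSq_R2]

/-- Any function on `ℝ²` dominated by `kS^{1/2}` times the slice norm satisfies the `L⁴` bound.
No measurability of `g` is needed: if `g ^ 4` is not integrable, its integral is `0`. -/
lemma L4_bound {s : ℝ} (hs : 1 / 2 < s) (b : SchwartzMap R3 ℝ) {g : R2 → ℝ} (hg0 : ∀ p, 0 ≤ g p)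
    (hg : ∀ p, g p ≤ √(kS s * nSq s b (p 0) (p 1)).toReal) :
    (∫ p : R2, g p ^ 4) ^ ((1 : ℝ) / 4)
      ≤ (4 * (kS s).toReal ^ 2) ^ ((1 : ℝ) / 4) * √(L2hHsv s b) * √(gradhL2hHsv s b) := by
  set i := (tSq s b).toReal with hi
  set j := (tSq s (dS 0 b) + tSq s (dS 1 b)).toReal with hj
  have hfin : kS s ^ 2 * (4 * (tSq s b * (tSq s (dS 0 b) + tSq s (dS 1 b)))) < ⊤ :=
    ENNReal.mul_lt_top (ENNReal.pow_lt_top (kS_lt_top hs)) (ENNReal.mul_lt_top (by simp)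
      (ENNReal.mul_lt_top (tSq_lt_top _ _)
        (ENNReal.add_lt_top.2 ⟨tSq_lt_top _ _, tSq_lt_top _ _⟩)))
  have hpt : ∀ p, ENNReal.ofReal (g p ^ 4) ≤ kS s ^ 2 * nSq s b (p 0) (p 1) ^ 2 := by
    intro p
    have hT : kS s * nSq s b (p 0) (p 1) ≠ ⊤ :=
      (ENNReal.mul_lt_top (kS_lt_top hs) (nSq_lt_top _ _ _ _)).ne
    rw [← mul_pow, ← ENNReal.ofReal_toReal hT, ← ENNReal.ofReal_pow ENNReal.toReal_nonneg]
    refine ENNReal.ofReal_le_ofReal ?_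
    calc g p ^ 4 ≤ √(kS s * nSq s b (p 0) (p 1)).toReal ^ 4 :=
          pow_le_pow_left₀ (hg0 p) (hg p) 4
      _ = (√(kS s * nSq s b (p 0) (p 1)).toReal ^ 2) ^ 2 := by ring
      _ = _ := by rw [Real.sq_sqrt ENNReal.toReal_nonneg]
  have hlin : ∫⁻ p : R2, ENNReal.ofReal (g p ^ 4)
      ≤ kS s ^ 2 * (4 * (tSq s b * (tSq s (dS 0 b) + tSq s (dS 1 b)))) := by
    refine (lintegral_mono hpt).trans ?_
    rw [lintegral_const_mul _ ((measurable_nSq_R2 s b).pow_const 2),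
      lintegral_R2 (f := fun q => nSq s b q.1 q.2 ^ 2) ((measurable_nSq s b).pow_const 2)]
    gcongr
    exact ladyzhenskaya s b
  have hint : ∫ p : R2, g p ^ 4 ≤ 4 * (kS s).toReal ^ 2 * (i * j) := by
    by_cases hI : Integrable fun p : R2 => g p ^ 4
    · rw [integral_eq_lintegral_of_nonneg_ae (Eventually.of_forall fun p => by
        have := hg0 p; positivity) hI.aestronglyMeasurable]
      refine (ENNReal.toReal_mono hfin.ne hlin).trans_eq ?_
      rw [ENNReal.toReal_mul, ENNReal.toReal_mul, ENNReal.toReal_mul, ENNReal.toReal_pow,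
        ENNReal.toReal_ofNat]
      ring
    · rw [integral_undef hI]
      positivity
  have hroot : ∀ t : ℝ, 0 ≤ t → t ^ ((1 : ℝ) / 4) = √√t := by
    intro t ht
    rw [Real.sqrt_eq_rpow, Real.sqrt_eq_rpow, ← Real.rpow_mul ht]
    norm_num
  have hi0 : 0 ≤ i := ENNReal.toReal_nonneg
  have hj0 : 0 ≤ j := ENNReal.toReal_nonneg
  calc (∫ p : R2, g p ^ 4) ^ ((1 : ℝ) / 4)
      ≤ (4 * (kS s).toReal ^ 2 * (i * j)) ^ ((1 : ℝ) / 4) :=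
        Real.rpow_le_rpow (integral_nonneg fun p => by have := hg0 p; positivity) hint
          (by norm_num)
    _ = _ := by
        rw [Real.mul_rpow (by positivity) (by positivity), Real.mul_rpow hi0 hj0, hroot i hi0,
          hroot j hj0, L2hHsv_eq, gradhL2hHsv_eq, mul_assoc]

theorem anisotropic_L4h_Linfv_interpolation (s : ℝ) (hs : 1 / 2 < s) :
    ∃ C : ℝ, 0 < C ∧ ∀ a : SchwartzMap R3 ℝ,
      L4hLinfv ⇑a ≤ C * Real.sqrt (L2hHsv s ⇑a) * Real.sqrt (gradhL2hHsv s ⇑a) ∧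
      LinfvL4h ⇑a ≤ C * Real.sqrt (L2hHsv s ⇑a) * Real.sqrt (gradhL2hHsv s ⇑a) := by
  -- The summand `1` only serves to make the constant visibly positive.
  refine ⟨(4 * (kS s).toReal ^ 2) ^ ((1 : ℝ) / 4) + 1, by positivity, fun a => ?_⟩
  have hle : (4 * (kS s).toReal ^ 2) ^ ((1 : ℝ) / 4) * √(L2hHsv s a) * √(gradhL2hHsv s a)
      ≤ ((4 * (kS s).toReal ^ 2) ^ ((1 : ℝ) / 4) + 1) * √(L2hHsv s a) * √(gradhL2hHsv s a) := by
    gcongr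
    linarith
  have hpt : ∀ (p : R2) (z : ℝ), |a (v3 (p 0) (p 1) z)|
      ≤ √(kS s * nSq s a (p 0) (p 1)).toReal := by
    intro p z
    refine Real.le_sqrt_of_sq_le ?_
    have h := ENNReal.toReal_mono
      (ENNReal.mul_lt_top (kS_lt_top hs) (nSq_lt_top s a (p 0) (p 1))).ne
      (sobolev_slice s a (p 0) (p 1) z)
    simpa [ENNReal.toReal_pow] using h
  refine ⟨(L4_bound hs a (fun p => Real.iSup_nonneg fun z => abs_nonneg _)
    fun p => ciSup_le fun z => hpt p z).trans hle, ciSup_le fun z => ?_⟩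
  exact (L4_bound hs a (fun p => abs_nonneg _) fun p => hpt p z).trans hle
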